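/- arXiv:2402.01990 — 2 statements merged into one kernel-verified Lean document; each statement's English description precedes it below -/
import Mathlib

section
/- Let λ ≠ 0, f : V → ℝ, p a nonnegative integer, and suppose u : V → ℝ solves Δu(x) = λ·e^{u(x)}·(e^{u(x)} − 1)^{2p+1} + f(x) for all x ∈ V. Then −(1/λ)·∫_V f dμ ≥ −((2p+1)^{2p+1}/(2p+2)^{2p+2})·|V|. In particular, if ∫_V f dμ > 0 and λ > 0 then λ ≥ ((2p+2)^{2p+2}/(2p+1)^{2p+1})·(∫_V f dμ)/|V|, and if ∫_V f dμ < 0 and λ < 0 then λ ≤ ((2p+2)^{2p+2}/(2p+1)^{2p+1})·(∫_V f dμ)/|V|. -/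
/-!
Since `w` is symmetric, the Laplacian has zero integral, so integrating the equation gives
`-(1/λ) ∫ f dμ = ∫ e^u (e^u - 1)^(2p+1) dμ`. The bound then follows pointwise from the minimum of
`t ↦ t (t - 1)^(2p+1)`, attained at `t = 1/(2p+2)`. That minimum is the inequality
`(n + 1) r^n ≤ n r^(n+1) + 1` for `r ≥ 0` (`amgm_aux`), rescaled. The two bounds on `λ` are
rearrangements according to the sign of `λ`.
-/

open Real

/-- Graph Laplacian: `Δu(x) = (1/μ(x)) Σ_y w x y (u y − u x)`. -/
noncomputable def glap {V : Type*} [Fintype V] (w : V → V → ℝ) (μ : V → ℝ)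
    (u : V → ℝ) (x : V) : ℝ :=
  (1 / μ x) * ∑ y, w x y * (u y - u x)

/-- Integral over the graph: `∫_V g dμ = Σ_x μ(x) g(x)`. -/
noncomputable def gint {V : Type*} [Fintype V] (μ : V → ℝ) (g : V → ℝ) : ℝ :=
  ∑ x, μ x * g x

/-- Gradient norm squared: `|∇u|²(x) = (1/(2μ(x))) Σ_y w x y (u y − u x)²`. -/
noncomputable def gradsq {V : Type*} [Fintype V] (w : V → V → ℝ) (μ : V → ℝ)
    (u : V → ℝ) (x : V) : ℝ :=
  (1 / (2 * μ x)) * ∑ y, w x y * (u y - u x) ^ 2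

/-- The functional `J_λ(u) = (1/2)∫|∇u|² + (λ/(2p+2))∫(e^u−1)^{2p+2} + ∫ f u dμ`. -/
noncomputable def Jfun {V : Type*} [Fintype V] (w : V → V → ℝ) (μ : V → ℝ)
    (p : ℕ) (lam : ℝ) (f : V → ℝ) (u : V → ℝ) : ℝ :=
  (1 / 2) * gint μ (gradsq w μ u)
    + (lam / (2 * p + 2)) * gint μ (fun x => (Real.exp (u x) - 1) ^ (2 * p + 2))
    + gint μ (fun x => f x * u x)

/-- Weighted AM-GM for `n` copies of `r ^ (n + 1)` and one copy of `1`. -/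
lemma amgm_aux (n : ℕ) (r : ℝ) (hr : 0 ≤ r) :
    ((n : ℝ) + 1) * r ^ n ≤ n * r ^ (n + 1) + 1 := by
  induction n with
  | zero => simp
  | succ n ih =>
    have h1 : 0 ≤ (r ^ (n + 1) - 1) * (r - 1) := by
      rcases le_total r 1 with h | h
      · exact mul_nonneg_of_nonpos_of_nonpos (sub_nonpos.2 (pow_le_one₀ hr h)) (sub_nonpos.2 h)
      · exact mul_nonneg (sub_nonneg.2 (one_le_pow₀ h)) (sub_nonneg.2 h)
    have h2 := mul_le_mul_of_nonneg_left ih hr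
    push_cast
    have e1 : r ^ (n + 1) = r * r ^ n := by ring
    have e2 : r ^ (n + 1 + 1) = r * (r * r ^ n) := by ring
    rw [e1] at h1 h2 ⊢
    rw [e2]
    nlinarith

/-- The minimum of `t (t - 1)^(2p+1)` over `t > 0`. -/
lemma pointwise_lower_bound (p : ℕ) (t : ℝ) (ht : 0 < t) :
    -((2 * (p : ℝ) + 1) ^ (2 * p + 1) / (2 * (p : ℝ) + 2) ^ (2 * p + 2))
      ≤ t * (t - 1) ^ (2 * p + 1) := by
  have ha : (0 : ℝ) < 2 * p + 1 := by positivity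
  have hb : (0 : ℝ) < 2 * p + 2 := by positivity
  rcases le_total 1 t with h | h
  · have h1 : 0 ≤ t * (t - 1) ^ (2 * p + 1) :=
      mul_nonneg ht.le (pow_nonneg (sub_nonneg.2 h) _)
    have h2 : 0 ≤ (2 * (p : ℝ) + 1) ^ (2 * p + 1) / (2 * (p : ℝ) + 2) ^ (2 * p + 2) := by
      positivity
    linarith
  · have hodd : (t - 1) ^ (2 * p + 1) = -(1 - t) ^ (2 * p + 1) := by
      rw [← Odd.neg_pow ⟨p, rfl⟩, neg_sub]
    -- the rescaling that moves the extremal point `1 - t = (2p+1)/(2p+2)` to `r = 1`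
    obtain ⟨r, hr⟩ : ∃ r, r = (1 - t) * (2 * p + 2) / (2 * p + 1) := ⟨_, rfl⟩
    have hr0 : 0 ≤ r := by
      rw [hr]
      have : 0 ≤ 1 - t := sub_nonneg.2 h
      positivity
    have hs : 1 - t = r * (2 * p + 1) / (2 * p + 2) := by
      rw [hr]
      field_simp
    have ht' : t = (2 * p + 2 - r * (2 * p + 1)) / (2 * p + 2) := by
      rw [eq_div_iff hb.ne']
      rw [eq_div_iff hb.ne'] at hs
      linarith
    have key := amgm_aux (2 * p + 1) r hr0
    push_cast at key
    have key' : (2 * p + 2 - r * (2 * p + 1)) * r ^ (2 * p + 1) ≤ 1 := by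
      rw [pow_succ r (2 * p + 1)] at key
      linarith
    have hfin : t * (1 - t) ^ (2 * p + 1)
        = ((2 * p + 2 - r * (2 * p + 1)) * r ^ (2 * p + 1))
          * ((2 * (p : ℝ) + 1) ^ (2 * p + 1) / (2 * (p : ℝ) + 2) ^ (2 * p + 2)) := by
      rw [hs, div_pow, mul_pow, pow_succ (2 * (p : ℝ) + 2) (2 * p + 1)]
      nth_rewrite 1 [ht']
      field_simp
    rw [hodd, mul_neg, neg_le_neg_iff, hfin]
    exact mul_le_of_le_one_left (by positivity) key'

lemma gint_glap_eq_zero {V : Type*} [Fintype V] (w : V → V → ℝ) (μ : V → ℝ)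
    (hsymm : ∀ x y, w x y = w y x) (hμ : ∀ x, 0 < μ x) (u : V → ℝ) :
    gint μ (glap w μ u) = 0 := by
  have h : gint μ (glap w μ u) = ∑ x, ∑ y, w x y * (u y - u x) := by
    unfold gint glap
    refine Finset.sum_congr rfl fun x _ => ?_
    rw [← mul_assoc, mul_one_div_cancel (hμ x).ne', one_mul]
  have h2 : ∑ x, ∑ y, w x y * (u y - u x) = -∑ x, ∑ y, w x y * (u y - u x) := by
    conv_lhs => rw [Finset.sum_comm]
    simp_rw [← Finset.sum_neg_distrib]
    refine Finset.sum_congr rfl fun x _ => Finset.sum_congr rfl fun y _ => ?_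
    rw [hsymm y x]
    ring
  linarith

theorem stmt_18 {V : Type*} [Fintype V] [Nonempty V]
    (w : V → V → ℝ) (μ : V → ℝ)
    (hsymm : ∀ x y, w x y = w y x) (hnonneg : ∀ x y, 0 ≤ w x y)
    (hμ : ∀ x, 0 < μ x) (p : ℕ)
    (lam : ℝ) (hlam : lam ≠ 0) (f : V → ℝ) (u : V → ℝ)
    (hu : ∀ x, glap w μ u x
        = lam * Real.exp (u x) * (Real.exp (u x) - 1) ^ (2 * p + 1) + f x) :
    -((2 * (p : ℝ) + 1) ^ (2 * p + 1) / (2 * (p : ℝ) + 2) ^ (2 * p + 2))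
        * gint μ (fun _ => 1) ≤ -(1 / lam) * gint μ f
    ∧ (0 < gint μ f → 0 < lam →
        ((2 * (p : ℝ) + 2) ^ (2 * p + 2) / (2 * (p : ℝ) + 1) ^ (2 * p + 1))
          * (gint μ f / gint μ (fun _ => 1)) ≤ lam)
    ∧ (gint μ f < 0 → lam < 0 →
        lam ≤ ((2 * (p : ℝ) + 2) ^ (2 * p + 2) / (2 * (p : ℝ) + 1) ^ (2 * p + 1))
          * (gint μ f / gint μ (fun _ => 1))) := by
  have hint : -(1 / lam) * gint μ f
      = gint μ (fun x => Real.exp (u x) * (Real.exp (u x) - 1) ^ (2 * p + 1)) := by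
    have h0 := gint_glap_eq_zero w μ hsymm hμ u
    have h1 : gint μ (glap w μ u)
        = lam * gint μ (fun x => Real.exp (u x) * (Real.exp (u x) - 1) ^ (2 * p + 1))
          + gint μ f := by
      unfold gint
      rw [Finset.mul_sum, ← Finset.sum_add_distrib]
      refine Finset.sum_congr rfl fun x _ => ?_
      rw [hu x]
      ring
    rw [h0] at h1
    field_simp
    linarith
  have hmain : -((2 * (p : ℝ) + 1) ^ (2 * p + 1) / (2 * (p : ℝ) + 2) ^ (2 * p + 2))
      * gint μ (fun _ => 1) ≤ -(1 / lam) * gint μ f := by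
    rw [hint]
    unfold gint
    rw [Finset.mul_sum]
    refine Finset.sum_le_sum fun x _ => ?_
    rw [mul_one, mul_comm]
    exact mul_le_mul_of_nonneg_left (pointwise_lower_bound p _ (Real.exp_pos _)) (hμ x).le
  have hvol : 0 < gint μ (fun _ => 1) := by
    unfold gint
    exact Finset.sum_pos (fun x _ => by simpa using hμ x) Finset.univ_nonempty
  refine ⟨hmain, ?_⟩
  have hA : (0 : ℝ) < (2 * (p : ℝ) + 1) ^ (2 * p + 1) := by positivity
  have hB : (0 : ℝ) < (2 * (p : ℝ) + 2) ^ (2 * p + 2) := by positivity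
  generalize (2 * (p : ℝ) + 1) ^ (2 * p + 1) = A at *
  generalize (2 * (p : ℝ) + 2) ^ (2 * p + 2) = B at *
  generalize gint μ (fun _ => 1) = M at *
  generalize gint μ f = F at *
  have h : F / lam ≤ A * M / B := by
    have e1 : -(1 / lam) * F = -(F / lam) := by ring
    have e2 : -(A / B) * M = -(A * M / B) := by ring
    rw [e1, e2] at hmain
    linarith
  have e3 : B / A * (F / M) = F * B / (A * M) := by
    rw [div_mul_div_comm, mul_comm B F]
  have hAM : 0 < A * M := mul_pos hA hvol
  rw [e3]
  refine ⟨fun _ hl => ?_, fun _ hl => ?_⟩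
  · rw [div_le_iff₀ hAM]
    rw [div_le_div_iff₀ hl hB] at h
    linarith
  · rw [le_div_iff₀ hAM]
    rw [div_le_iff_of_neg hl, div_mul_eq_mul_div, div_le_iff₀ hB] at h
    linarith
end

section
/- For every real number u and every nonnegative integer p, e^{u}·(e^{u} − 1)^{2p+1} ≥ −(2p+1)^{2p+1}/(2p+2)^{2p+2}. -/
/-!
With `t = 1 - exp u` and `m = 2 * p + 1` odd, the expression equals `-(1 - t) * t ^ m`. It is
nonnegative when `exp u ≥ 1`; otherwise `t > 0`, and the bound is the maximum of `(1 - t) * t ^ m`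
given by `one_sub_mul_pow_le`, a form of Bernoulli's inequality.
-/

open Real

/-- The right side is the value of `(1 - t) * t ^ m` at its maximizer `t = m / (m + 1)`. This is
Bernoulli's inequality `r ^ (m + 1) ≥ 1 + (m + 1) * (r - 1)` at the ratio `r = m / ((m + 1) * t)`
of the maximizer to `t`, multiplied through by `t ^ (m + 1) / m`. -/
theorem one_sub_mul_pow_le (m : ℕ) (hm : 0 < m) (t : ℝ) (ht : 0 < t) :
    (1 - t) * t ^ m ≤ (m : ℝ) ^ m / ((m : ℝ) + 1) ^ (m + 1) := by
  have hm' : (0 : ℝ) < m := by exact_mod_cast hm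
  have hr : 0 < (m : ℝ) / ((m + 1) * t) := by positivity
  have hB := one_add_mul_le_pow (a := (m : ℝ) / ((m + 1) * t) - 1) (by linarith) (m + 1)
  have hL : 1 + ((m + 1 : ℕ) : ℝ) * ((m : ℝ) / ((m + 1) * t) - 1) = m * (1 - t) / t := by
    push_cast
    field_simp
    ring
  rw [hL, add_sub_cancel, div_pow, mul_pow] at hB
  have hmul := mul_le_mul_of_nonneg_right hB (by positivity : 0 ≤ t ^ (m + 1) / m)
  calc (1 - t) * t ^ m = m * (1 - t) / t * (t ^ (m + 1) / m) := by field_simp; ring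
    _ ≤ _ := hmul
    _ = _ := by field_simp; ring

theorem stmt_19 (u : ℝ) (p : ℕ) :
    -((2 * (p : ℝ) + 1) ^ (2 * p + 1) / (2 * (p : ℝ) + 2) ^ (2 * p + 2))
      ≤ Real.exp u * (Real.exp u - 1) ^ (2 * p + 1) := by
  rcases le_or_gt 1 (Real.exp u) with h | h
  · have h1 : 0 ≤ Real.exp u - 1 := by linarith
    have hl : -((2 * (p : ℝ) + 1) ^ (2 * p + 1) / (2 * (p : ℝ) + 2) ^ (2 * p + 2)) ≤ 0 :=
      neg_nonpos.mpr (by positivity)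
    exact hl.trans (by positivity)
  · have key := one_sub_mul_pow_le (2 * p + 1) (by omega) (1 - Real.exp u) (by linarith)
    have hodd : (Real.exp u - 1) ^ (2 * p + 1) = -(1 - Real.exp u) ^ (2 * p + 1) := by
      rw [← Odd.neg_pow ⟨p, rfl⟩, neg_sub]
    have h2 : (2 * (p : ℝ) + 1) + 1 = 2 * p + 2 := by ring
    push_cast at key
    rw [h2, sub_sub_cancel] at key
    rw [hodd, mul_neg]
    exact neg_le_neg key
end
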